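/- arXiv:math/0506370 — 2 statements merged into one kernel-verified Lean document; each statement's English description precedes it below -/
import Mathlib

section
/- Path composition formula for iterated path integrals: Let γ : [0,1] → ℂ be continuously differentiable, let s₁,…,sₙ ∈ ℂ satisfy γ(u) ≠ sᵢ for all u ∈ [0,1] and all i, and let c ∈ [0,1]. Then ∫_{0≤u₁≤…≤uₙ≤1} ∏_{i=1}^n γ'(uᵢ)/(γ(uᵢ)−sᵢ) du = Σ_{k=0}^{n} (∫_{0≤u₁≤…≤u_k≤c} ∏_{i=1}^{k} γ'(uᵢ)/(γ(uᵢ)−sᵢ) du) · (∫_{c≤v₁≤…≤v_{n−k}≤1} ∏_{j=1}^{n−k} γ'(vⱼ)/(γ(vⱼ)−s_{k+j}) dv). -/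
/-! Each point `0 ≤ u₁ ≤ … ≤ uₙ ≤ 1` of the simplex has a well-defined number `k` of coordinates that are
`≤ c`, and by monotonicity these are the first `k` ones. This cuts the simplex into `n + 1` disjoint
measurable pieces (`simplex_eq_biUnion_cutSet`, `pairwiseDisjoint_cutSet`). Concatenation
`ℝᵏ × ℝⁿ⁻ᵏ ≃ ℝⁿ` preserves Lebesgue measure and identifies the `k`-th piece with the product of
`Δᵏ(0,c)` and `Δⁿ⁻ᵏ(c,1)`, up to the null set where a coordinate of the second factor equals `c`.
As the integrand is a product of functions of single coordinates, the integral over the piece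
factors (`setIntegral_cutSet`). Additivity over the pieces requires integrability, which holds
because the integrand is continuous on the compact simplex.
-/

open MeasureTheory

/-- The simplex `Δⁿ(a,b) = {t : a ≤ t₁ ≤ … ≤ tₙ ≤ b}` inside `ℝⁿ`. -/
def simplex (n : ℕ) (a b : ℝ) : Set (Fin n → ℝ) :=
  {t | Monotone t ∧ ∀ i, t i ∈ Set.Icc a b}

/-- The iterated integral `I(f₁,…,fₙ; a, b) = ∫_{Δⁿ(a,b)} f₁(t₁)⋯fₙ(tₙ) dt`. -/
noncomputable def iterInt (n : ℕ) (f : Fin n → ℝ → ℂ) (a b : ℝ) : ℂ :=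
  ∫ t in simplex n a b, ∏ i, f i (t i)

open Classical in
/-- The set of `(n,m)`-shuffles: permutations `σ` of `{0,…,n+m-1}` such that
`σ⁻¹` is strictly increasing on the first `n` and on the last `m` indices. -/
noncomputable def shuffles (n m : ℕ) : Finset (Equiv.Perm (Fin (n + m))) :=
  Finset.univ.filter fun σ =>
    StrictMono (fun i : Fin n => σ.symm (Fin.castAdd m i)) ∧
    StrictMono (fun j : Fin m => σ.symm (Fin.natAdd n j))
/-- The iterated path integral
`∫_{a ≤ u₁ ≤ … ≤ uₙ ≤ b} ∏ᵢ γ'(uᵢ)/(γ(uᵢ) − sᵢ) du` for a path `γ` defined on `[0,1]`. -/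
noncomputable def pathIterInt (γ : ℝ → ℂ) (n : ℕ) (s : Fin n → ℂ) (a b : ℝ) : ℂ :=
  ∫ u in simplex n a b, ∏ i, derivWithin γ (Set.Icc 0 1) (u i) / (γ (u i) - s i)

/-- The part of `Δⁿ(a,b)` on which exactly the first `k` coordinates are `≤ c`. The inequality on
the remaining coordinates is strict, so that different values of `k` give disjoint sets. -/
def cutSet (n : ℕ) (a b c : ℝ) (k : ℕ) : Set (Fin n → ℝ) :=
  {t | t ∈ simplex n a b ∧ ∀ i : Fin n, ((i : ℕ) < k → t i ≤ c) ∧ (k ≤ (i : ℕ) → c < t i)}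

lemma isClosed_simplex (n : ℕ) (a b : ℝ) : IsClosed (simplex n a b) := by
  have h : simplex n a b = (⋂ (i : Fin n) (j : Fin n) (_ : i ≤ j), {t | t i ≤ t j}) ∩
      Set.Icc (fun _ => a) (fun _ => b) := by
    ext t
    simp only [simplex, Monotone, Set.mem_ofPred_eq, Set.mem_inter_iff, Set.mem_iInter, Set.mem_Icc,
      Pi.le_def, forall_and]
  rw [h]
  refine IsClosed.inter ?_ isClosed_Icc
  exact isClosed_iInter fun i => isClosed_iInter fun j => isClosed_iInter fun _ =>
    isClosed_le (continuous_apply i) (continuous_apply j)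

lemma isCompact_simplex (n : ℕ) (a b : ℝ) : IsCompact (simplex n a b) := by
  refine (isCompact_Icc (a := fun _ : Fin n => a) (b := fun _ => b)).of_isClosed_subset
    (isClosed_simplex n a b) ?_
  intro t ht
  exact ⟨fun i => (ht.2 i).1, fun i => (ht.2 i).2⟩

lemma measurableSet_cutSet (n : ℕ) (a b c : ℝ) (k : ℕ) : MeasurableSet (cutSet n a b c k) := by
  have h : cutSet n a b c k = simplex n a b ∩
      ⋂ i : Fin n, ((⋂ _ : (i : ℕ) < k, {t | t i ≤ c}) ∩ ⋂ _ : k ≤ (i : ℕ), {t | c < t i}) := by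
    ext t
    simp only [cutSet, Set.mem_ofPred_eq, Set.mem_inter_iff, Set.mem_iInter]
  rw [h]
  refine (isClosed_simplex n a b).measurableSet.inter (MeasurableSet.iInter fun i => ?_)
  exact (MeasurableSet.iInter fun _ => measurableSet_le (measurable_pi_apply i) measurable_const).inter
    (MeasurableSet.iInter fun _ => measurableSet_lt measurable_const (measurable_pi_apply i))

lemma simplex_eq_biUnion_cutSet (n : ℕ) (a b c : ℝ) :
    simplex n a b = ⋃ k ∈ Finset.range (n + 1), cutSet n a b c k := by
  classical
  ext t
  simp only [Set.mem_iUnion, Finset.mem_range, exists_prop]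
  refine ⟨fun ht => ?_, fun ⟨k, _, hk⟩ => hk.1⟩
  -- `k` is the first index from which on all coordinates exceed `c`
  have hex : ∃ k : ℕ, ∀ i : Fin n, k ≤ (i : ℕ) → c < t i :=
    ⟨n, fun i hi => absurd i.2 (by omega)⟩
  refine ⟨Nat.find hex, Nat.lt_succ_of_le (Nat.find_min' hex fun i hi => absurd i.2 (by omega)),
    ht, fun i => ⟨fun hi => ?_, Nat.find_spec hex i⟩⟩
  have := Nat.find_min hex hi
  push Not at this
  obtain ⟨j, hij, hj⟩ := this
  exact (ht.1 (Fin.le_def.2 hij)).trans hj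

lemma pairwiseDisjoint_cutSet (n : ℕ) (a b c : ℝ) :
    Set.Pairwise (↑(Finset.range (n + 1)) : Set ℕ)
      (Function.onFun Disjoint (cutSet n a b c)) := by
  have key : ∀ k l : ℕ, k < l → l < n + 1 → Disjoint (cutSet n a b c k) (cutSet n a b c l) := by
    intro k l hkl hl
    rw [Set.disjoint_left]
    intro t hk hl'
    have h1 := (hk.2 ⟨k, by omega⟩).2 le_rfl
    have h2 := (hl'.2 ⟨k, by omega⟩).1 hkl
    exact absurd h1 (not_lt.2 h2)
  intro k hk l hl hne
  simp only [Finset.coe_range, Set.mem_Iio] at hk hl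
  rcases lt_or_gt_of_ne hne with h | h
  · exact key k l h hl
  · exact (key l k h hk).symm

/-- Concatenation of vectors, as a measurable equivalence. -/
def appendEquiv (k m : ℕ) : ((Fin k → ℝ) × (Fin m → ℝ)) ≃ᵐ (Fin (k + m) → ℝ) :=
  (MeasurableEquiv.sumPiEquivProdPi (fun _ : Fin k ⊕ Fin m => ℝ)).symm.trans
    (MeasurableEquiv.piCongrLeft (fun _ => ℝ) finSumFinEquiv)

lemma measurePreserving_appendEquiv (k m : ℕ) : MeasurePreserving (appendEquiv k m) :=
  (volume_measurePreserving_sumPiEquivProdPi_symm (fun _ : Fin k ⊕ Fin m => ℝ)).trans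
    (volume_measurePreserving_piCongrLeft (fun _ => ℝ) finSumFinEquiv)

@[simp]
lemma appendEquiv_castAdd (k m : ℕ) (p : (Fin k → ℝ) × (Fin m → ℝ)) (i : Fin k) :
    appendEquiv k m p (Fin.castAdd m i) = p.1 i := by
  have := Equiv.piCongrLeft_apply_apply (fun _ : Fin (k + m) => ℝ) finSumFinEquiv
    ((Equiv.sumPiEquivProdPi (fun _ : Fin k ⊕ Fin m => ℝ)).symm p) (Sum.inl i)
  exact this

@[simp]
lemma appendEquiv_natAdd (k m : ℕ) (p : (Fin k → ℝ) × (Fin m → ℝ)) (j : Fin m) :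
    appendEquiv k m p (Fin.natAdd k j) = p.2 j := by
  have := Equiv.piCongrLeft_apply_apply (fun _ : Fin (k + m) => ℝ) finSumFinEquiv
    ((Equiv.sumPiEquivProdPi (fun _ : Fin k ⊕ Fin m => ℝ)).symm p) (Sum.inr j)
  exact this

lemma appendEquiv_preimage_cutSet (k m : ℕ) {a b c : ℝ} (hac : a ≤ c) (hcb : c ≤ b) :
    appendEquiv k m ⁻¹' cutSet (k + m) a b c k =
      simplex k a c ×ˢ (simplex m c b ∩ {v | ∀ j, c < v j}) := by
  ext p
  simp only [Set.mem_preimage, Set.mem_prod, Set.mem_inter_iff, Set.mem_ofPred_eq]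
  constructor
  · rintro ⟨⟨hmono, hab⟩, hcut⟩
    have h1 : ∀ i, p.1 i ≤ c := fun i => by simpa using (hcut (Fin.castAdd m i)).1 (by simp)
    have h2 : ∀ j, c < p.2 j := fun j => by simpa using (hcut (Fin.natAdd k j)).2 (by simp)
    refine ⟨⟨fun i j hij => ?_, fun i => ⟨?_, h1 i⟩⟩, ⟨fun i j hij => ?_, fun j => ⟨(h2 j).le, ?_⟩⟩, h2⟩
    · simpa using hmono (show Fin.castAdd m i ≤ Fin.castAdd m j from hij)
    · simpa using (hab (Fin.castAdd m i)).1
    · simpa using hmono (show Fin.natAdd k i ≤ Fin.natAdd k j from Nat.add_le_add_left hij k)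
    · simpa using (hab (Fin.natAdd k j)).2
  · rintro ⟨⟨hm1, h1⟩, ⟨hm2, h2⟩, h3⟩
    refine ⟨⟨fun i j => ?_, fun i => ?_⟩, fun i => ?_⟩
    · refine Fin.addCases (fun i => ?_) (fun i => ?_) i <;>
        refine Fin.addCases (fun j => ?_) (fun j => ?_) j <;> intro hij
      · simpa using hm1 (show i ≤ j from hij)
      · simpa using (h1 i).2.trans (h2 j).1
      · simp only [Fin.le_def, Fin.val_natAdd, Fin.val_castAdd] at hij
        omega
      · simpa using hm2 (show i ≤ j from Nat.le_of_add_le_add_left hij)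
    · refine Fin.addCases (fun i => ?_) (fun i => ?_) i
      · simpa using ⟨(h1 i).1, (h1 i).2.trans hcb⟩
      · simpa using ⟨hac.trans (h2 i).1, (h2 i).2⟩
    · refine Fin.addCases (fun i => ?_) (fun i => ?_) i
      · simpa using (h1 i).2
      · simpa using h3 i

lemma simplex_inter_lt_ae_eq (m : ℕ) (b c : ℝ) :
    (simplex m c b ∩ {v | ∀ j, c < v j} : Set (Fin m → ℝ)) =ᵐ[volume] simplex m c b := by
  have h : ∀ᵐ v : Fin m → ℝ, ∀ j, v j ≠ c :=
    ae_all_iff.2 fun j => Measure.ae_eval_ne (μ := fun _ : Fin m => (volume : Measure ℝ)) j c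
  filter_upwards [h] with v hv
  refine propext ⟨fun h => h.1, fun h => ⟨h, fun j => lt_of_le_of_ne (h.2 j).1 (hv j).symm⟩⟩

/-- Fubini on one piece of the simplex. Integrability is not needed: the integral of a product of
functions of separate variables always factors. -/
lemma setIntegral_cutSet (f : ℕ → ℝ → ℂ) (k m : ℕ) {a b c : ℝ} (hac : a ≤ c) (hcb : c ≤ b) :
    ∫ u in cutSet (k + m) a b c k, ∏ i : Fin (k + m), f i (u i) =
      (∫ u in simplex k a c, ∏ i : Fin k, f i (u i)) *
        ∫ v in simplex m c b, ∏ j : Fin m, f (k + j) (v j) := by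
  rw [← (measurePreserving_appendEquiv k m).setIntegral_preimage_emb
    (appendEquiv k m).measurableEmbedding, appendEquiv_preimage_cutSet k m hac hcb,
    ← setIntegral_congr_set (simplex_inter_lt_ae_eq m b c), ← setIntegral_prod_mul]
  simp only [Fin.prod_univ_add, appendEquiv_castAdd, appendEquiv_natAdd, Fin.val_castAdd,
    Fin.val_natAdd]
  rfl

/-- Path composition formula for iterated path integrals. -/
theorem pathIterInt_path_composition (γ : ℝ → ℂ)
    (hγ : ContDiffOn ℝ 1 γ (Set.Icc 0 1)) (n : ℕ) (s : ℕ → ℂ)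
    (hs : ∀ u ∈ Set.Icc (0 : ℝ) 1, ∀ i < n, γ u ≠ s i)
    (c : ℝ) (hc : c ∈ Set.Icc (0 : ℝ) 1) :
    pathIterInt γ n (fun i => s i) 0 1 =
      ∑ k ∈ Finset.range (n + 1),
        pathIterInt γ k (fun i => s i) 0 c *
          pathIterInt γ (n - k) (fun j => s (k + j)) c 1 := by
  classical
  set f : ℕ → ℝ → ℂ := fun i u => derivWithin γ (Set.Icc 0 1) u / (γ u - s i) with hf
  have hcont : ∀ i < n, ContinuousOn (f i) (Set.Icc 0 1) := fun i hi =>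
    (hγ.continuousOn_derivWithin (uniqueDiffOn_Icc zero_lt_one) le_rfl).div
      (hγ.continuousOn.sub continuousOn_const) fun u hu => sub_ne_zero.2 (hs u hu i hi)
  have hint : IntegrableOn (fun u : Fin n → ℝ => ∏ i : Fin n, f i (u i)) (simplex n 0 1) := by
    refine ContinuousOn.integrableOn_compact (isCompact_simplex n 0 1) ?_
    exact continuousOn_finsetProd _ fun i _ =>
      (hcont i i.2).comp (continuous_apply i).continuousOn fun t ht => ht.2 i
  change ∫ u in simplex n 0 1, ∏ i : Fin n, f i (u i) = _
  rw [simplex_eq_biUnion_cutSet n 0 1 c, integral_biUnion_finset _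
    (fun k _ => measurableSet_cutSet n 0 1 c k) (pairwiseDisjoint_cutSet n 0 1 c)
    fun k _ => hint.mono_set fun t ht => ht.1]
  refine Finset.sum_congr rfl fun k hk => ?_
  obtain ⟨m, rfl⟩ := Nat.exists_eq_add_of_le (Nat.lt_succ_iff.1 (Finset.mem_range.1 hk))
  rw [setIntegral_cutSet f k m hc.1 hc.2, Nat.add_sub_cancel_left]
  rfl
end

section
/- Iterated integral representation of one-variable multiple polylogarithms: Let m ≥ 1, n₁,…,n_m ≥ 1 be integers, set N := n₁ + … + n_m, and let z be a real number with 0 < z < 1. Define functions g₁,…,g_N : ℝ → ℝ as follows: writing the index set {1,…,N} as consecutive blocks of lengths n₁,…,n_m, the first index of each block carries the function t ↦ 1/(1−t) and every other index carries t ↦ 1/t. Then ∫_{Δᴺ(0,z)} ∏_{i=1}^N g_i(t_i) dt₁⋯dt_N = Σ_{0<k₁<k₂<…<k_m} z^{k_m}/(k₁^{n₁} · k₂^{n₂} ⋯ k_m^{n_m}), where the integrand is Lebesgue-integrable on the simplex and the multiple series converges absolutely. -/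
/-!
The proof is carried out in `ℝ≥0∞`, where sums and integrals of nonnegative terms may be exchanged
freely; integrability and summability then come from finiteness of the common value.

Integrating out the largest variable gives the recursion
`I_{N+1}(z) = ∫₀ᶻ g_{N+1}(s) I_N(s) ds` (`lint_simplex_succ`). On power series,
integration against `1/t` divides the `k`-th coefficient by `k`, and integration against
`1/(1-t) = Σ tˡ` replaces it by `(Σ_{j<k} a_j)/k`. Hence `I_N(z) = Σ_k a_N(k) zᵏ` with the
coefficients `coef` defined by these two rules (`lint_simplex_eq_tsum`). All these coefficients
are at most `1` (`coef_le_one`), so the series is dominated by the geometric one and is finite for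
`z < 1`.

Passing through one whole block of length `n_r` turns the coefficients `a(k)` into
`(Σ_{j<k} a(j))/k^{n_r}` (`coef_block`). Unrolling this over all blocks writes the series
`Σ_k a_N(k) zᵏ` as the nested sum over `0 < k₁ < … < k_m` (`tsum_coef_blocks`).
-/

open MeasureTheory

open scoped ENNReal

/-! ### Integrating out the largest variable -/

lemma measurableSet_simplex (n : ℕ) (a b : ℝ) : MeasurableSet (simplex n a b) := by
  have : simplex n a b = (⋂ (i : Fin n) (j : Fin n) (_ : i ≤ j), {t | t i ≤ t j}) ∩
      ⋂ i : Fin n, {t | t i ∈ Set.Icc a b} := by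
    ext t
    simp [simplex, Monotone]
  rw [this]
  refine MeasurableSet.inter ?_ ?_
  · refine MeasurableSet.iInter fun i => MeasurableSet.iInter fun j => MeasurableSet.iInter fun _ =>
      measurableSet_le (measurable_pi_apply i) (measurable_pi_apply j)
  · exact MeasurableSet.iInter fun i => measurable_pi_apply i measurableSet_Icc

lemma snoc_mem_simplex (N : ℕ) (z s : ℝ) (t : Fin N → ℝ) :
    (Fin.snoc t s : Fin (N + 1) → ℝ) ∈ simplex (N + 1) 0 z ↔
      s ∈ Set.Icc 0 z ∧ t ∈ simplex N 0 s := by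
  constructor
  · rintro ⟨h1, h2⟩
    have hs := h2 (Fin.last N)
    simp only [Fin.snoc_last] at hs
    refine ⟨hs, fun i j hij => ?_, fun i => ⟨?_, ?_⟩⟩
    · simpa using h1 (Fin.castSucc_le_castSucc_iff.2 hij)
    · simpa using (h2 i.castSucc).1
    · simpa using h1 (Fin.le_last i.castSucc)
  · rintro ⟨hs, h1, h2⟩
    refine ⟨fun i j hij => ?_, fun i => ?_⟩
    · induction j using Fin.lastCases with
      | last =>
        induction i using Fin.lastCases with
        | last => simp
        | cast i => simpa using (h2 i).2
      | cast j =>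
        induction i using Fin.lastCases with
        | last => exact absurd hij (by simp [Fin.le_def])
        | cast i => simpa using h1 (Fin.castSucc_le_castSucc_iff.1 hij)
    · induction i using Fin.lastCases with
      | last => simpa using hs
      | cast i => simpa using ⟨(h2 i).1, (h2 i).2.trans hs.2⟩

lemma lint_simplex_succ (G : ℕ → ℝ → ℝ≥0∞) (hG : ∀ i, Measurable (G i)) (N : ℕ) (z : ℝ) :
    ∫⁻ t in simplex (N + 1) 0 z, ∏ i : Fin (N + 1), G i (t i) =
      ∫⁻ s in Set.Icc 0 z, G N s * ∫⁻ t in simplex N 0 s, ∏ i : Fin N, G i (t i) := by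
  have hmeas : ∀ M : ℕ, Measurable fun t : Fin M → ℝ => ∏ i : Fin M, G i (t i) := fun M =>
    Finset.measurable_prod _ fun i _ => (hG i).comp (measurable_pi_apply i)
  have hp := (volume_preserving_piFinSuccAbove (fun _ : Fin (N + 1) => ℝ) (Fin.last N)).symm
  rw [← lintegral_indicator (measurableSet_simplex _ _ _), ← hp.lintegral_comp
    ((hmeas _).indicator (measurableSet_simplex _ _ _)), Measure.volume_eq_prod,
    lintegral_prod _ (by
      refine Measurable.aemeasurable ?_
      exact ((hmeas _).indicator (measurableSet_simplex _ _ _)).comp (MeasurableEquiv.measurable _)),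
    ← lintegral_indicator measurableSet_Icc]
  refine lintegral_congr fun s => ?_
  have hval : ∀ t : Fin N → ℝ,
      (MeasurableEquiv.piFinSuccAbove (fun _ : Fin (N + 1) => ℝ) (Fin.last N)).symm (s, t) =
        (Fin.snoc t s : Fin (N + 1) → ℝ) := fun t => by
    simp [MeasurableEquiv.piFinSuccAbove, Fin.insertNthEquiv, Fin.insertNth_last']
  simp only [hval]
  by_cases hs : s ∈ Set.Icc 0 z
  · rw [Set.indicator_of_mem hs, ← lintegral_const_mul _ (hmeas _),
      ← lintegral_indicator (measurableSet_simplex _ _ _)]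
    refine lintegral_congr fun t => ?_
    by_cases ht : t ∈ simplex N 0 s
    · rw [Set.indicator_of_mem ((snoc_mem_simplex _ _ _ _).2 ⟨hs, ht⟩), Set.indicator_of_mem ht,
        Fin.prod_univ_castSucc]
      simp [mul_comm]
    · rw [Set.indicator_of_notMem (fun h => ht ((snoc_mem_simplex _ _ _ _).1 h).2),
        Set.indicator_of_notMem ht]
  · rw [Set.indicator_of_notMem hs]
    refine (lintegral_congr fun t => ?_).trans lintegral_zero
    rw [Set.indicator_of_notMem (fun h => hs ((snoc_mem_simplex _ _ _ _).1 h).1)]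

/-! ### Power series coefficients of the iterated integrals -/

/-- The number `1/k` in `ℝ≥0∞`, with value `0` (rather than `∞`) at `k = 0`, so that the
recursion below keeps the constant coefficient equal to `0`. -/
noncomputable def recip (k : ℕ) : ℝ≥0∞ := ENNReal.ofReal ((k : ℝ)⁻¹)

open Classical in
/-- The coefficient of `zᵏ` in the iterated integral of length `N` whose `i`-th form is
`dt/(1-t)` if `P i` and `dt/t` otherwise. -/
noncomputable def coef (P : ℕ → Prop) : ℕ → ℕ → ℝ≥0∞
  | 0, k => if k = 0 then 1 else 0
  | N + 1, k => if P N then (∑' j, if j < k then coef P N j else 0) * recip k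
      else coef P N k * recip k

lemma recip_zero : recip 0 = 0 := by simp [recip]

lemma recip_le_one (k : ℕ) : recip k ≤ 1 := by
  unfold recip
  rw [ENNReal.ofReal_le_one]
  exact Nat.cast_inv_le_one k

lemma natCast_mul_recip_le (k : ℕ) : (k : ℝ≥0∞) * recip k ≤ 1 := by
  unfold recip
  rw [← ENNReal.ofReal_natCast, ← ENNReal.ofReal_mul (by positivity), ENNReal.ofReal_le_one]
  exact mul_inv_le_one

lemma coef_succ_zero (P : ℕ → Prop) (N : ℕ) : coef P (N + 1) 0 = 0 := by
  simp [coef, recip_zero]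

lemma coef_le_one (P : ℕ → Prop) (N k : ℕ) : coef P N k ≤ 1 := by
  induction N generalizing k with
  | zero => unfold coef; split_ifs <;> simp
  | succ N ih =>
    unfold coef
    split_ifs
    · refine le_trans ?_ (natCast_mul_recip_le k)
      gcongr
      calc (∑' j, if j < k then coef P N j else 0) ≤ ∑' j, if j < k then (1 : ℝ≥0∞) else 0 := by
            refine ENNReal.tsum_le_tsum fun j => ?_
            split_ifs
            · exact ih j
            · exact le_rfl
        _ = k := by
            rw [tsum_eq_sum (s := Finset.range k) (by
              intro b hb
              rw [Finset.mem_range] at hb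
              simp [hb]), Finset.sum_congr rfl (g := fun _ => (1 : ℝ≥0∞)) (by
              intro b hb
              rw [Finset.mem_range] at hb
              simp [hb])]
            simp
    · exact mul_le_one' (ih k) (recip_le_one k)

lemma lint_pow (k : ℕ) (z : ℝ) (hz : 0 ≤ z) :
    ∫⁻ s in Set.Icc 0 z, ENNReal.ofReal s ^ k = recip (k + 1) * ENNReal.ofReal z ^ (k + 1) := by
  have h1 : ∫⁻ s in Set.Icc 0 z, ENNReal.ofReal s ^ k =
      ∫⁻ s in Set.Icc 0 z, ENNReal.ofReal (s ^ k) :=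
    setLIntegral_congr_fun measurableSet_Icc fun s hs => (ENNReal.ofReal_pow hs.1 k).symm
  rw [h1, ← ofReal_integral_eq_lintegral_ofReal]
  · rw [integral_Icc_eq_integral_Ioc, ← intervalIntegral.integral_of_le hz, integral_pow, recip,
      ← ENNReal.ofReal_pow hz, ← ENNReal.ofReal_mul (by positivity)]
    congr 1
    push_cast
    simp [div_eq_inv_mul]
  · exact (continuous_pow k).integrableOn_Icc
  · filter_upwards [ae_restrict_mem measurableSet_Icc] with s hs
    exact pow_nonneg hs.1 k

/-- Integration against `dt/t` divides the coefficient of `tᵏ` by `k`, for `k ≥ 1`. -/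
lemma lint_inv_mul_pow (k : ℕ) (hk : k ≠ 0) (z : ℝ) (hz : 0 ≤ z) :
    ∫⁻ s in Set.Icc 0 z, ENNReal.ofReal (1 / s) * ENNReal.ofReal s ^ k =
      recip k * ENNReal.ofReal z ^ k := by
  obtain ⟨k, rfl⟩ := Nat.exists_eq_succ_of_ne_zero hk
  rw [Nat.succ_eq_add_one, ← lint_pow k z hz]
  refine lintegral_congr_ae ?_
  -- the point `s = 0`, where `1 / s` is a junk value, has measure zero
  have h0 : ∀ᵐ s : ℝ ∂(volume.restrict (Set.Icc 0 z)), s ≠ 0 :=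
    ae_restrict_of_ae (Measure.ae_ne volume 0)
  filter_upwards [h0, ae_restrict_mem measurableSet_Icc] with s hs0 hs
  have hpos : 0 < s := lt_of_le_of_ne hs.1 (Ne.symm hs0)
  rw [pow_succ', ← mul_assoc, ← ENNReal.ofReal_mul (by positivity), one_div_mul_cancel hs0]
  simp

/-- Integration against `dt/(1-t)`, by expanding the geometric series. -/
lemma lint_geom_mul_pow (j : ℕ) (z : ℝ) (hz : 0 ≤ z) (hz1 : z < 1) :
    ∫⁻ s in Set.Icc 0 z, ENNReal.ofReal (1 / (1 - s)) * ENNReal.ofReal s ^ j =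
      ∑' k, if j < k then recip k * ENNReal.ofReal z ^ k else 0 := by
  have h1 : ∫⁻ s in Set.Icc 0 z, ENNReal.ofReal (1 / (1 - s)) * ENNReal.ofReal s ^ j =
      ∫⁻ s in Set.Icc 0 z, ∑' l : ℕ, ENNReal.ofReal s ^ (l + j) := by
    refine setLIntegral_congr_fun measurableSet_Icc fun s hs => ?_
    have hs1 : 0 < 1 - s := by linarith [hs.2]
    simp only [pow_add]
    rw [ENNReal.tsum_mul_right, ENNReal.tsum_geometric, one_div, ENNReal.ofReal_inv_of_pos hs1,
      ENNReal.ofReal_sub _ hs.1, ENNReal.ofReal_one]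
  rw [h1, lintegral_tsum (fun l => by fun_prop)]
  have hinj : Function.Injective fun l : ℕ => l + j + 1 := fun a b h => by
    simpa using h
  rw [← hinj.tsum_eq (f := fun k => if j < k then recip k * ENNReal.ofReal z ^ k else 0)]
  · refine tsum_congr fun l => ?_
    rw [lint_pow _ _ hz, if_pos (by omega)]
  · intro k hk
    have : j < k := by
      by_contra h
      simp [h] at hk
    exact ⟨k - (j + 1), by simp only; omega⟩

open Classical in
/-- The form at position `i`: `1/(1-t)` if `P i`, and `1/t` otherwise. -/
noncomputable def form (P : ℕ → Prop) (i : ℕ) (t : ℝ) : ℝ :=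
  if P i then 1 / (1 - t) else 1 / t

lemma measurable_form (P : ℕ → Prop) (i : ℕ) : Measurable (form P i) := by
  unfold form
  split_ifs <;> fun_prop

/-- The power series expansion of the iterated integral. The condition `P 0` says that the innermost
form is `dt/(1-t)`, which is what makes the integral converge at `0`. -/
lemma lint_simplex_eq_tsum (P : ℕ → Prop) (hP : P 0) (N : ℕ) (z : ℝ) (hz : 0 ≤ z) (hz1 : z < 1) :
    ∫⁻ t in simplex N 0 z, ∏ i : Fin N, ENNReal.ofReal (form P i (t i)) =
      ∑' k, coef P N k * ENNReal.ofReal z ^ k := by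
  induction N generalizing z with
  | zero =>
    have : simplex 0 0 z = Set.univ := by
      ext t
      simp [simplex, Subsingleton.monotone]
    rw [this, tsum_eq_single 0 (by intro b hb; simp [coef, hb])]
    simp [coef, volume_pi]
  | succ N ih =>
    rw [lint_simplex_succ (fun i s => ENNReal.ofReal (form P i s))
      (fun i => (measurable_form P i).ennreal_ofReal)]
    have h1 : ∫⁻ s in Set.Icc 0 z, ENNReal.ofReal (form P N s) *
          ∫⁻ t in simplex N 0 s, ∏ i : Fin N, ENNReal.ofReal (form P i (t i)) =
        ∫⁻ s in Set.Icc 0 z, ∑' k, coef P N k *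
          (ENNReal.ofReal (form P N s) * ENNReal.ofReal s ^ k) := by
      refine setLIntegral_congr_fun measurableSet_Icc fun s hs => ?_
      rw [ih s hs.1 (hs.2.trans_lt hz1), ← ENNReal.tsum_mul_left]
      refine tsum_congr fun k => by ring
    have hm : ∀ k, Measurable fun s : ℝ => ENNReal.ofReal (form P N s) * ENNReal.ofReal s ^ k :=
      fun k => (measurable_form P N).ennreal_ofReal.mul (by fun_prop)
    rw [h1, lintegral_tsum (fun k => ((hm k).const_mul _).aemeasurable)]
    simp only [lintegral_const_mul _ (hm _)]
    by_cases hN : P N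
    · simp only [form, hN, if_true, lint_geom_mul_pow _ z hz hz1, coef]
      simp only [← ENNReal.tsum_mul_left, ← ENNReal.tsum_mul_right]
      rw [ENNReal.tsum_comm]
      refine tsum_congr fun k => tsum_congr fun j => ?_
      split_ifs <;> ring
    · simp only [form, hN, if_false, coef]
      refine tsum_congr fun k => ?_
      rcases eq_or_ne k 0 with rfl | hk
      · -- `N ≠ 0` because `P 0` holds, so the constant coefficient vanishes
        obtain ⟨M, rfl⟩ := Nat.exists_eq_succ_of_ne_zero (n := N) (by rintro rfl; exact hN hP)
        simp [coef_succ_zero]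
      · rw [lint_inv_mul_pow k hk z hz, mul_assoc]

/-! ### From coefficients to nested sums -/

/-- The effect of a whole block of `d` forms starting at position `a`. -/
lemma coef_block (P : ℕ → Prop) (a d : ℕ) (hd : 1 ≤ d) (ha : P a)
    (hb : ∀ i, a < i → i < a + d → ¬ P i) (k : ℕ) :
    coef P (a + d) k = (∑' j, if j < k then coef P a j else 0) * recip k ^ d := by
  induction d, hd using Nat.le_induction with
  | base => simp [coef, ha]
  | succ d hd ih =>
    rw [← add_assoc, coef, if_neg (hb _ (by omega) (by omega)),
      ih fun i h1 h2 => hb i h1 (by omega)]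
    ring

lemma strictMono_snoc (r : ℕ) (k : Fin (r + 1) → ℕ) (j : ℕ) :
    StrictMono (Fin.snoc k j : Fin (r + 2) → ℕ) ↔ StrictMono k ∧ k (Fin.last r) < j := by
  rw [Fin.strictMono_iff_lt_succ, Fin.strictMono_iff_lt_succ, Fin.forall_fin_succ']
  simp only [Fin.succ_last, Fin.snoc_last, Fin.snoc_castSucc, Fin.succ_castSucc]

open Classical in
/-- Iterating the block rule `b_{r+1}(k) = (Σ_{j<k} b_r(j)) / k^{n_r}` from `b₀ = δ₀` yields the
nested sum over `0 < k₀ < … < k_r`, here tested against an arbitrary function `f` of `k_r`. The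
freedom in `f` is what makes the induction work. -/
lemma tsum_coef_blocks (b : ℕ → ℕ → ℝ≥0∞) (n : ℕ → ℕ) (r : ℕ)
    (h0 : ∀ k, b 0 k = if k = 0 then 1 else 0)
    (hb : ∀ q ≤ r, ∀ k, b (q + 1) k = (∑' j, if j < k then b q j else 0) * recip k ^ n q)
    (f : ℕ → ℝ≥0∞) :
    ∑' k, b (r + 1) k * f k = ∑' k : Fin (r + 1) → ℕ,
      if StrictMono k ∧ 0 < k 0 then (∏ i, recip (k i) ^ n i) * f (k (Fin.last r)) else 0 := by
  induction r generalizing f with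
  | zero =>
    rw [← (Equiv.funUnique (Fin 1) ℕ).symm.tsum_eq]
    refine tsum_congr fun k => ?_
    rw [hb 0 le_rfl, tsum_eq_single 0 (by intro j hj; simp [h0, hj])]
    have : StrictMono (uniqueElim k : Fin 1 → ℕ) := Subsingleton.strictMono _
    rcases Nat.eq_zero_or_pos k with rfl | hk
    · simp
    · simp [h0, this, hk]
  | succ r ih =>
    rw [← (Fin.snocEquiv fun _ : Fin (r + 2) => ℕ).tsum_eq, ENNReal.tsum_prod']
    refine tsum_congr fun j => ?_
    have e : (∑' l, if l < j then b (r + 1) l else 0) =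
        ∑' l, b (r + 1) l * if l < j then 1 else 0 := by
      refine tsum_congr fun l => ?_
      split_ifs <;> simp
    rw [hb (r + 1) le_rfl, e, ih (fun q hq => hb q (by omega)), mul_assoc,
      ← ENNReal.tsum_mul_right]
    refine tsum_congr fun k => ?_
    have hz : (Fin.snoc k j : Fin (r + 2) → ℕ) 0 = k 0 := by
      rw [← Fin.castSucc_zero, Fin.snoc_castSucc]
    simp only [Fin.snocEquiv, Equiv.coe_fn_mk, strictMono_snoc, hz, Fin.snoc_last,
      Fin.prod_univ_castSucc (n := r + 1), Fin.snoc_castSucc]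
    by_cases h1 : StrictMono k ∧ 0 < k 0 <;> by_cases h2 : k (Fin.last r) < j
    · simp [h1, h2]; ring
    · simp [h1, h2]
    · rw [if_neg h1, if_neg (by tauto)]; simp
    · rw [if_neg h1, if_neg (by tauto)]; simp

open Classical in
/-- Iterated integral representation of one-variable multiple polylogarithms:
with `N = n₁ + … + n_m` and the integrand carrying `1/(1−t)` at the first index of each
block of length `nᵣ` (the block starting at `Σ_{j<r} nⱼ`) and `1/t` elsewhere,
`∫_{Δᴺ(0,z)} ∏ gᵢ(tᵢ) dt = Σ_{0<k₁<…<k_m} z^{k_m}/∏ kᵢ^{nᵢ}`. -/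
theorem multiple_polylog_iterInt (m : ℕ) (hm : 1 ≤ m) (n : Fin m → ℕ)
    (hn : ∀ i, 1 ≤ n i) (z : ℝ) (hz0 : 0 < z) (hz1 : z < 1) :
    IntegrableOn (fun t : Fin (∑ i, n i) → ℝ =>
        ∏ i : Fin (∑ i, n i), if ∃ r : Fin m, i.val = ∑ j ∈ Finset.univ.filter (· < r), n j
          then 1 / (1 - t i) else 1 / t i)
      (simplex (∑ i, n i) 0 z) ∧
    Summable (fun k : Fin m → ℕ =>
        if StrictMono k ∧ 0 < k ⟨0, hm⟩ then
          z ^ (k ⟨m - 1, by omega⟩) / ∏ i, (k i : ℝ) ^ n i else 0) ∧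
    (∫ t in simplex (∑ i, n i) 0 z,
        ∏ i : Fin (∑ i, n i), if ∃ r : Fin m, i.val = ∑ j ∈ Finset.univ.filter (· < r), n j
          then 1 / (1 - t i) else 1 / t i) =
      ∑' k : Fin m → ℕ,
        if StrictMono k ∧ 0 < k ⟨0, hm⟩ then
          z ^ (k ⟨m - 1, by omega⟩) / ∏ i, (k i : ℝ) ^ n i else 0 := by
  obtain ⟨r, rfl⟩ : ∃ r, m = r + 1 := ⟨m - 1, by omega⟩
  -- starting positions of the blocks, extended to all of `ℕ`
  set s : ℕ → ℕ := fun q => ∑ j ∈ Finset.univ.filter (fun j : Fin (r + 1) => j.val < q), n j with hs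
  set n' : ℕ → ℕ := fun q => if h : q < r + 1 then n ⟨q, h⟩ else 1 with hn'
  set P : ℕ → Prop := fun i => ∃ q : Fin (r + 1), i = ∑ j ∈ Finset.univ.filter (· < q), n j with hP
  have hPs : ∀ i, P i ↔ ∃ q < r + 1, i = s q := by
    intro i
    constructor
    · rintro ⟨q, hq⟩
      exact ⟨q, q.2, hq⟩
    · rintro ⟨q, hq, h⟩
      exact ⟨⟨q, hq⟩, h⟩
  have hs0 : s 0 = 0 := by simp [hs]
  have hs1 : ∀ q < r + 1, s (q + 1) = s q + n' q := by
    intro q hq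
    have : Finset.univ.filter (fun j : Fin (r + 1) => j.val < q + 1) =
        insert ⟨q, hq⟩ (Finset.univ.filter (fun j : Fin (r + 1) => j.val < q)) := by
      ext j
      simp [Fin.ext_iff]
      omega
    simp only [hs, hn', hq, dif_pos]
    rw [this, Finset.sum_insert (by simp), add_comm]
  have hsN : s (r + 1) = ∑ i, n i := by
    simp only [hs]
    congr 1
    ext j
    simpa using Nat.le_of_lt_succ j.2
  have hsm : Monotone s := fun p q hpq =>
    Finset.sum_le_sum_of_subset fun j hj => by
      simp only [Finset.mem_filter, Finset.mem_univ, true_and] at hj ⊢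
      omega
  have hblock : ∀ q ≤ r, ∀ k, coef P (s (q + 1)) k =
      (∑' j, if j < k then coef P (s q) j else 0) * recip k ^ n' q := by
    intro q hq k
    have hq' : q < r + 1 := by omega
    rw [hs1 q hq']
    refine coef_block P _ _ ?_ ((hPs _).2 ⟨q, hq', rfl⟩) ?_ k
    · simp only [hn', hq', dif_pos]
      exact hn _
    · intro i h1 h2 hi
      obtain ⟨p, hp, rfl⟩ := (hPs i).1 hi
      rw [← hs1 q hq'] at h2
      have h3 : q < p := hsm.reflect_lt h1
      have h4 : p < q + 1 := hsm.reflect_lt h2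
      omega
  have hP0 : P 0 := (hPs 0).2 ⟨0, by omega, hs0.symm⟩
  set N := ∑ i, n i with hN
  set F : (Fin N → ℝ) → ℝ := fun t => ∏ i : Fin N, form P i (t i) with hF
  set T : (Fin (r + 1) → ℕ) → ℝ := fun k =>
    if StrictMono k ∧ 0 < k 0 then z ^ (k (Fin.last r)) / ∏ i, (k i : ℝ) ^ n i else 0 with hT
  have hFm : Measurable F := Finset.measurable_prod _ fun i _ =>
    (measurable_form P i).comp (measurable_pi_apply i)
  have hform : ∀ t ∈ simplex N 0 z, ∀ i : Fin N, 0 ≤ form P i (t i) := by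
    intro t ht i
    have h := ht.2 i
    unfold form
    split_ifs
    · exact one_div_nonneg.2 (by linarith [h.2])
    · exact one_div_nonneg.2 h.1
  have hF0 : 0 ≤ᵐ[volume.restrict (simplex N 0 z)] F := by
    filter_upwards [ae_restrict_mem (measurableSet_simplex _ _ _)] with t ht
    exact Finset.prod_nonneg fun i _ => hform t ht i
  have hT0 : ∀ k, 0 ≤ T k := by
    intro k
    simp only [hT]
    split_ifs
    · positivity
    · exact le_rfl
  have hseries : ∫⁻ t in simplex N 0 z, ENNReal.ofReal (F t) =
      ∑' k, coef P N k * ENNReal.ofReal z ^ k := by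
    rw [← lint_simplex_eq_tsum P hP0 N z hz0.le hz1]
    refine setLIntegral_congr_fun (measurableSet_simplex _ _ _) fun t ht => ?_
    exact ENNReal.ofReal_prod_of_nonneg fun i _ => hform t ht i
  have hfin : ∑' k, coef P N k * ENNReal.ofReal z ^ k ≠ ∞ := by
    have hle : ∑' k, coef P N k * ENNReal.ofReal z ^ k ≤ ∑' k, ENNReal.ofReal z ^ k :=
      ENNReal.tsum_le_tsum fun k => mul_le_of_le_one_left' (coef_le_one P N k)
    refine ne_top_of_le_ne_top ?_ hle
    rw [ENNReal.tsum_geometric, Ne, ENNReal.inv_eq_top, tsub_eq_zero_iff_le, not_le]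
    simpa using hz1
  have hsum : ∑' k, coef P N k * ENNReal.ofReal z ^ k = ∑' k, ENNReal.ofReal (T k) := by
    rw [← hsN, tsum_coef_blocks (fun q => coef P (s q)) n' r
      (fun k => by simp only [hs0, coef]) hblock]
    refine tsum_congr fun k => ?_
    simp only [hT]
    split_ifs with h
    · rw [div_eq_inv_mul, ENNReal.ofReal_mul (by positivity), ENNReal.ofReal_pow hz0.le,
        ← Finset.prod_inv_distrib, ENNReal.ofReal_prod_of_nonneg (fun i _ => by positivity)]
      congr 1
      refine Finset.prod_congr rfl fun i _ => ?_
      have : n' i = n i := by simp only [hn', i.2, dif_pos]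
      rw [this, recip, ← ENNReal.ofReal_pow (by positivity), inv_pow]
    · simp
  have hTfin : ∑' k, ENNReal.ofReal (T k) ≠ ∞ := hsum ▸ hfin
  have hTs : Summable T := by
    have := ENNReal.summable_toReal hTfin
    simpa only [ENNReal.toReal_ofReal (hT0 _)] using this
  have hFi : IntegrableOn F (simplex N 0 z) := by
    refine ⟨hFm.aestronglyMeasurable, ?_⟩
    rw [hasFiniteIntegral_iff_ofReal hF0, hseries]
    exact hfin.lt_top
  -- `form` decides `P i` classically, while the integrand may use another decision procedure
  have hFeq : (fun t : Fin N → ℝ => ∏ i : Fin N,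
      if ∃ q : Fin (r + 1), i.val = ∑ j ∈ Finset.univ.filter (· < q), n j
        then 1 / (1 - t i) else 1 / t i) = F := by
    funext t
    refine Finset.prod_congr rfl fun i _ => ?_
    simp only [form, hP]
  rw [hFeq]
  refine ⟨hFi, hTs, ?_⟩
  change ∫ t in simplex N 0 z, F t = ∑' k, T k
  rw [integral_eq_lintegral_of_nonneg_ae hF0 hFm.aestronglyMeasurable, hseries, hsum,
    ← ENNReal.ofReal_tsum_of_nonneg hT0 hTs, ENNReal.toReal_ofReal (tsum_nonneg hT0)]
end
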